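/- Let ⋈ ∈ {<,>} and let ⋈̲ be its reflexive closure (≤, respectively ≥). For every HyperLTL_temp formula ψ whose free variables are among π₁,…,πₖ, every weighted Kripke structure K, and every v ∈ [0,1], there exists a nondeterministic Büchi automaton A over the alphabet W^{AP_{≤k}} such that for every trace assignment Π over the free variables of ψ: (1) if ⟦ψ⟧_Π^{𝕋(K)} ⋈ v and all traces in the image of Π belong to 𝕋(K), then A accepts t_Π; and (2) if A accepts t_Π and t_Π is a lasso, then all traces in the image of Π belong to 𝕃(K) and ⟦ψ⟧_Π^{𝕃(K)} ⋈̲ v. -/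

import Mathlib

open Set

noncomputable section

/-- A (weighted) trace assigns to each time step and atomic proposition a weight in `[0,1]`. -/
abbrev Trace (AP : Type) : Type := ℕ → AP → unitInterval

/-- Boolean traces: all weights are `0` or `1`. -/
def IsBoolTrace {AP : Type} (t : Trace AP) : Prop :=
  ∀ i p, (t i p : ℝ) = 0 ∨ (t i p : ℝ) = 1

/-- Lassos: eventually periodic traces, i.e. traces of the form `u·v^ω`. -/
def IsLasso {AP : Type} (t : Trace AP) : Prop :=
  ∃ N c : ℕ, 0 < c ∧ ∀ n, N ≤ n → t (n + c) = t n

/-- Shifting a trace assignment: `Π[i,∞]`. -/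
def shiftA {AP Var : Type} (ρ : Var → Trace AP) (i : ℕ) : Var → Trace AP :=
  fun π n => ρ π (n + i)

/-- `prefMin g i = min_{0 ≤ j < i} g j` (with the empty minimum being `1`). -/
def prefMin (g : ℕ → ℝ) : ℕ → ℝ
  | 0 => 1
  | n + 1 => min (prefMin g n) (g n)

/-- A discounting sequence: strictly decreasing, with values in `[0,1]` and limit `0`. -/
def IsDiscounting (η : ℕ → ℝ) : Prop :=
  StrictAnti η ∧ (∀ i, η i ∈ Set.Icc (0:ℝ) 1) ∧
    Filter.Tendsto η Filter.atTop (nhds 0)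

/-- Quantifier-free HyperLTL_temp formulas, over a set `D` (indexing the discounting
sequences). -/
inductive TQF (AP Var D : Type) : Type where
  | atom : AP → Var → TQF AP Var D
  | neg : TQF AP Var D → TQF AP Var D
  | or : TQF AP Var D → TQF AP Var D → TQF AP Var D
  | next : TQF AP Var D → TQF AP Var D
  | untl : TQF AP Var D → TQF AP Var D → TQF AP Var D
  | untlD : D → TQF AP Var D → TQF AP Var D → TQF AP Var D

/-- HyperLTL_temp formulas: a prefix of quantifiers over a quantifier-free formula. -/
inductive TForm (AP Var D : Type) : Type where
  | qf : TQF AP Var D → TForm AP Var D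
  | ex : Var → TForm AP Var D → TForm AP Var D
  | all : Var → TForm AP Var D → TForm AP Var D

variable {AP Var D : Type}

/-- Satisfaction value of quantifier-free HyperLTL_temp formulas, where `η` interprets the
discounting sequence indices. -/
def tsemQF (η : D → ℕ → ℝ) : TQF AP Var D → (Var → Trace AP) → Set (Trace AP) → ℝ
  | .atom p π, ρ, _ => (ρ π 0 p : ℝ)
  | .neg φ, ρ, T => 1 - tsemQF η φ ρ T
  | .or φ₁ φ₂, ρ, T => max (tsemQF η φ₁ ρ T) (tsemQF η φ₂ ρ T)
  | .next φ, ρ, T => tsemQF η φ (shiftA ρ 1) T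
  | .untl φ₁ φ₂, ρ, T =>
      ⨆ i : ℕ, min (tsemQF η φ₂ (shiftA ρ i) T)
        (prefMin (fun j => tsemQF η φ₁ (shiftA ρ j) T) i)
  | .untlD d φ₁ φ₂, ρ, T =>
      ⨆ i : ℕ, min (η d i * tsemQF η φ₂ (shiftA ρ i) T)
        (prefMin (fun j => η d j * tsemQF η φ₁ (shiftA ρ j) T) i)

/-- Satisfaction value `⟦ψ⟧_Π^T` of HyperLTL_temp formulas. -/
def tsem [DecidableEq Var] (η : D → ℕ → ℝ) :
    TForm AP Var D → (Var → Trace AP) → Set (Trace AP) → ℝ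
  | .qf φ, ρ, T => tsemQF η φ ρ T
  | .ex π ψ, ρ, T => sSup ((fun t => tsem η ψ (Function.update ρ π t) T) '' T)
  | .all π ψ, ρ, T => sInf ((fun t => tsem η ψ (Function.update ρ π t) T) '' T)

/-- The variables occurring in a quantifier-free formula. -/
def varsTQF : TQF AP Var D → Set Var
  | .atom _ π => {π}
  | .neg φ => varsTQF φ
  | .or φ₁ φ₂ => varsTQF φ₁ ∪ varsTQF φ₂
  | .next φ => varsTQF φ
  | .untl φ₁ φ₂ => varsTQF φ₁ ∪ varsTQF φ₂
  | .untlD _ φ₁ φ₂ => varsTQF φ₁ ∪ varsTQF φ₂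

/-- The free variables of a HyperLTL_temp formula. -/
def freeVars : TForm AP Var D → Set Var
  | .qf φ => varsTQF φ
  | .ex π ψ => freeVars ψ \ {π}
  | .all π ψ => freeVars ψ \ {π}

/-- A weighted Kripke structure over `AP`: a finite state set, a finite weight set
`W ⊆ [0,1]`, initial states, a total transition relation, and a weighted labeling. -/
structure Kripke (AP : Type) where
  S : Type
  [finS : Fintype S]
  W : Set ℝ
  Wfin : W.Finite
  Wsub : W ⊆ Set.Icc (0:ℝ) 1
  init : Set S
  tr : S → S → Prop
  total : ∀ s, ∃ s', tr s s'
  L : S → AP → unitInterval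
  L_mem : ∀ s p, ((L s p : ℝ)) ∈ W

/-- The set `𝕋(K)` of traces of a Kripke structure. -/
def Kripke.Traces {AP : Type} (K : Kripke AP) : Set (Trace AP) :=
  {t | ∃ s : ℕ → K.S, s 0 ∈ K.init ∧ (∀ i, K.tr (s i) (s (i + 1))) ∧
        ∀ i p, t i p = K.L (s i) p}

/-- The set `𝕃(K)` of lassos of a Kripke structure. -/
def Kripke.Lassos {AP : Type} (K : Kripke AP) : Set (Trace AP) :=
  {t | t ∈ K.Traces ∧ IsLasso t}

/-- A nondeterministic Büchi automaton over the alphabet `Alph`. -/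
structure NBA (Alph : Type) where
  Q : Type
  [finQ : Fintype Q]
  init : Set Q
  δ : Q → Alph → Set Q
  acc : Set Q

/-- Büchi acceptance: some run visits the accepting set infinitely often. -/
def NBA.Accepts {Alph : Type} (A : NBA Alph) (w : ℕ → Alph) : Prop :=
  ∃ r : ℕ → A.Q, r 0 ∈ A.init ∧ (∀ i, r (i + 1) ∈ A.δ (r i) (w i)) ∧
    ∀ N, ∃ n, N ≤ n ∧ r n ∈ A.acc

/-- The encoding `t_Π` of a trace assignment `[π₁ ↦ t₁, …, π_k ↦ t_k]` as a single trace
over the atomic propositions `AP_{≤k}`, identified with `AP × Fin k`. -/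
def encode {AP : Type} {k : ℕ} (ts : Fin k → Trace AP) : Trace (AP × Fin k) :=
  fun n q => ts q.2 n q.1

/-! ### Recognizable languages of infinite words -/

section Recognizable

variable {Γ Γ' B C : Type}

/-- The suffix of the word `w` starting at position `i`. -/
def wordDrop (w : ℕ → Γ) (i : ℕ) : ℕ → Γ := fun n => w (n + i)

theorem wordDrop_wordDrop (w : ℕ → Γ) (i j : ℕ) :
    wordDrop (wordDrop w i) j = wordDrop w (j + i) := by
  funext n; simp [wordDrop, add_assoc]

theorem wordDrop_zero (w : ℕ → Γ) : wordDrop w 0 = w := rfl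

/-- The word over the product alphabet with components `w` and `z`. -/
def wordPair (w : ℕ → Γ) (z : ℕ → B) : ℕ → Γ × B := fun n => (w n, z n)

/-- A colouring of finite words, read off as the prefixes of infinite words, whose value on
`u·a` depends only on the colour of `u` and the letter `a`. -/
structure PrefixColoring (Γ C : Type) where
  col : ℕ → (ℕ → Γ) → C
  zero : ∀ w w', col 0 w = col 0 w'
  succ : ∀ n n' w w', col n w = col n' w' → w n = w' n' → col (n + 1) w = col (n' + 1) w'

theorem PrefixColoring.congr (F : PrefixColoring Γ C) {w w' : ℕ → Γ} :
    ∀ n, (∀ i < n, w i = w' i) → F.col n w = F.col n w'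
  | 0, _ => F.zero _ _
  | n + 1, h => F.succ _ _ _ _ (F.congr n fun i hi => h i (by omega)) (h n (by omega))

/-- The endpoints of a factorization of an infinite word into (possibly empty) finite blocks. -/
structure IsCut (a : ℕ → ℕ) : Prop where
  zero : a 0 = 0
  step : ∀ i, a i ≤ a (i + 1)
  unbounded : ∀ n, ∃ i, n < a i

theorem IsCut.monotone {a : ℕ → ℕ} (ha : IsCut a) : Monotone a := monotone_nat_of_le_succ ha.step

theorem IsCut.of_strictMono {a : ℕ → ℕ} (h0 : a 0 = 0) (ha : StrictMono a) : IsCut a :=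
  ⟨h0, fun i => (ha (Nat.lt_succ_self i)).le, fun n => ⟨n + 1, ha.le_apply (x := n + 1)⟩⟩

theorem IsCut.exists_block {a : ℕ → ℕ} (ha : IsCut a) (p : ℕ) :
    ∃ j, a j ≤ p ∧ p < a (j + 1) := by
  classical
  have h := ha.unbounded p
  obtain ⟨j, hj⟩ : ∃ j, Nat.find h = j + 1 :=
    Nat.exists_eq_succ_of_ne_zero fun h0 => by
      have := Nat.find_spec h
      rw [h0, ha.zero] at this
      omega
  refine ⟨j, ?_, hj ▸ Nat.find_spec h⟩
  exact not_lt.1 (Nat.find_min h (m := j) (by omega))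

theorem IsCut.block_unique {a : ℕ → ℕ} (ha : IsCut a) {p i j : ℕ} (hi : a i ≤ p)
    (hi' : p < a (i + 1)) (hj : a j ≤ p) (hj' : p < a (j + 1)) : i = j := by
  rcases lt_trichotomy i j with h | h | h
  · have := ha.monotone (show i + 1 ≤ j from h); omega
  · exact h
  · have := ha.monotone (show j + 1 ≤ i from h); omega

/-- The factorization induced on the suffix starting at a position `p ≤ a (j + 1)`. -/
def cutTail (a : ℕ → ℕ) (j p : ℕ) : ℕ → ℕ
  | 0 => 0
  | i + 1 => a (j + 1 + i) - p

theorem IsCut.tail {a : ℕ → ℕ} (ha : IsCut a) (j p : ℕ) : IsCut (cutTail a j p) := by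
  refine ⟨rfl, ?_, fun n => ?_⟩
  · rintro (_ | i)
    · exact Nat.zero_le _
    · exact Nat.sub_le_sub_right (ha.step _) p
  · obtain ⟨i, hi⟩ := ha.unbounded (n + p)
    refine ⟨i + 1, ?_⟩
    have := ha.monotone (show i ≤ j + 1 + i by omega)
    simp only [cutTail]
    omega

/-- The colour of the `i`-th block of `w` in the factorization `a`. -/
def PrefixColoring.block (F : PrefixColoring Γ C) (a : ℕ → ℕ) (w : ℕ → Γ) (i : ℕ) : C :=
  F.col (a (i + 1) - a i) (wordDrop w (a i))

/-- `F` saturates `X` if membership in `X` only depends on the block colours of a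
factorization. -/
def PrefixColoring.Saturates (F : PrefixColoring Γ C) (X : Set (ℕ → Γ)) : Prop :=
  ∀ w w' a a', IsCut a → IsCut a' → (∀ i, F.block a w i = F.block a' w' i) → w ∈ X → w' ∈ X

theorem PrefixColoring.Saturates.drop {F : PrefixColoring Γ C} {X : Set (ℕ → Γ)}
    (hF : F.Saturates X) {w w' : ℕ → Γ} {a a' : ℕ → ℕ} (ha : IsCut a) (ha' : IsCut a')
    (h : ∀ i, F.block a w i = F.block a' w' i) {j p p' : ℕ} (hp : p ≤ a (j + 1))
    (hp' : p' ≤ a' (j + 1))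
    (hc : F.col (a (j + 1) - p) (wordDrop w p) = F.col (a' (j + 1) - p') (wordDrop w' p'))
    (hX : wordDrop w p ∈ X) : wordDrop w' p' ∈ X := by
  refine hF _ _ _ _ (ha.tail j p) (ha'.tail j p') ?_ hX
  rintro (_ | i)
  · exact hc
  · have key : ∀ {b : ℕ → ℕ} (u : ℕ → Γ) (q : ℕ), IsCut b → q ≤ b (j + 1) →
        F.block (cutTail b j q) (wordDrop u q) (i + 1) = F.block b u (j + 1 + i) := by
      intro b u q hb hq
      have h1 := hb.monotone (show j + 1 ≤ j + 1 + i by omega)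
      have h2 := hb.step (j + 1 + i)
      simp only [PrefixColoring.block, cutTail, wordDrop_wordDrop]
      rw [show b (j + 1 + i) - q + q = b (j + 1 + i) by omega,
        show b (j + 1 + (i + 1)) - q - (b (j + 1 + i) - q) =
          b (j + 1 + i + 1) - b (j + 1 + i) by rw [← add_assoc]; omega]
    rw [key w p ha hp, key w' p' ha' hp']
    exact h _

/-- A language of infinite words is recognizable if it is saturated by a finite colouring. -/
def Recognizable (X : Set (ℕ → Γ)) : Prop :=
  ∃ (C : Type) (_ : Finite C) (F : PrefixColoring Γ C), F.Saturates X

theorem Recognizable.compl {X : Set (ℕ → Γ)} : Recognizable X → Recognizable Xᶜ := by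
  rintro ⟨C, hC, F, hF⟩
  exact ⟨C, hC, F, fun w w' a a' ha ha' h hw hw' =>
    hw (hF w' w a' a ha' ha (fun i => (h i).symm) hw')⟩

theorem Recognizable.univ : Recognizable (Set.univ : Set (ℕ → Γ)) :=
  ⟨Unit, inferInstance, ⟨fun _ _ => (), fun _ _ => rfl, fun _ _ _ _ _ _ => rfl⟩,
    fun _ _ _ _ _ _ _ _ => trivial⟩

theorem Recognizable.empty : Recognizable (∅ : Set (ℕ → Γ)) := by
  simpa using (Recognizable.univ (Γ := Γ)).compl

theorem Recognizable.iInter {ι : Type} [Finite ι] {X : ι → Set (ℕ → Γ)}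
    (h : ∀ i, Recognizable (X i)) : Recognizable (⋂ i, X i) := by
  choose C hC F hF using h
  refine ⟨∀ i, C i, inferInstance, ⟨fun n w i => (F i).col n w,
    fun w w' => funext fun i => (F i).zero w w', fun n n' w w' h hl =>
    funext fun i => (F i).succ n n' w w' (congrFun h i) hl⟩, ?_⟩
  intro w w' a a' ha ha' h hw
  rw [Set.mem_iInter] at hw ⊢
  exact fun i => hF i w w' a a' ha ha' (fun m => congrFun (h m) i) (hw i)

theorem Recognizable.iUnion {ι : Type} [Finite ι] {X : ι → Set (ℕ → Γ)}
    (h : ∀ i, Recognizable (X i)) : Recognizable (⋃ i, X i) := by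
  rw [← compl_compl (⋃ i, X i), Set.compl_iUnion]
  exact (Recognizable.iInter fun i => (h i).compl).compl

theorem Recognizable.inter {X Y : Set (ℕ → Γ)} (hX : Recognizable X) (hY : Recognizable Y) :
    Recognizable (X ∩ Y) := by
  rw [Set.inter_eq_iInter]
  exact Recognizable.iInter (by rintro (_ | _) <;> assumption)

theorem Recognizable.union {X Y : Set (ℕ → Γ)} (hX : Recognizable X) (hY : Recognizable Y) :
    Recognizable (X ∪ Y) := by
  rw [Set.union_eq_iUnion]
  exact Recognizable.iUnion (by rintro (_ | _) <;> assumption)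

theorem Recognizable.comap {X : Set (ℕ → Γ')} (hX : Recognizable X) (g : Γ → Γ') :
    Recognizable {w : ℕ → Γ | (fun n => g (w n)) ∈ X} := by
  obtain ⟨C, hC, F, hF⟩ := hX
  refine ⟨C, hC, ⟨fun n w => F.col n fun m => g (w m), fun _ _ => F.zero _ _,
    fun n n' w w' h hl => F.succ _ _ _ _ h (congrArg g hl)⟩, ?_⟩
  exact fun w w' a a' ha ha' h hw =>
    hF (fun n => g (w n)) (fun n => g (w' n)) a a' ha ha' h hw

/-- Two factorizations with the same empty blocks have the same first nonempty block. -/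
theorem IsCut.exists_first_block {a a' : ℕ → ℕ} (ha : IsCut a) (ha' : IsCut a')
    (h : ∀ i, a (i + 1) - a i = 0 ↔ a' (i + 1) - a' i = 0) :
    ∃ j, a j = 0 ∧ 0 < a (j + 1) ∧ a' j = 0 ∧ 0 < a' (j + 1) := by
  obtain ⟨j, hj, hj'⟩ := ha.exists_block 0
  have hz : ∀ i ≤ j, a' i = 0 := by
    intro i
    induction i with
    | zero => exact fun _ => ha'.zero
    | succ i ih =>
      intro hi
      have h1 := ha.monotone hi
      have := (h i).1 (by omega)
      have := ih (by omega)
      omega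
  refine ⟨j, by omega, hj', hz j le_rfl, ?_⟩
  have := h j
  have := hz j le_rfl
  omega

theorem Recognizable.first (P : Γ → Prop) : Recognizable {w : ℕ → Γ | P (w 0)} := by
  refine ⟨Prop × Prop, inferInstance, ⟨fun n w => (n = 0, n ≠ 0 ∧ P (w 0)), ?_, ?_⟩, ?_⟩
  · simp
  · intro n n' w w' h hl
    simp only [Prod.mk.injEq, eq_iff_iff] at h ⊢
    refine ⟨by simp, ?_⟩
    rcases Nat.eq_zero_or_pos n with rfl | hn
    · obtain rfl : n' = 0 := h.1.1 rfl
      simp [hl]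
    · have hn' : n' ≠ 0 := fun h0 => hn.ne' (h.1.2 h0)
      have := h.2
      simp only [ne_eq, hn.ne', hn', not_false_eq_true, true_and] at this
      simpa using this
  · intro w w' a a' ha ha' h hw
    simp only [PrefixColoring.block, Prod.mk.injEq, eq_iff_iff] at h
    obtain ⟨j, h1, h2, h3, h4⟩ := ha.exists_first_block ha' fun i => (h i).1
    have := (h j).2
    simp only [h1, h3, wordDrop_zero] at this
    exact (this.1 ⟨by omega, hw⟩).2

theorem Recognizable.next {X : Set (ℕ → Γ)} (hX : Recognizable X) :
    Recognizable {w : ℕ → Γ | wordDrop w 1 ∈ X} := by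
  obtain ⟨C, hC, F, hF⟩ := hX
  refine ⟨Prop × C × C, inferInstance,
    ⟨fun n w => (n = 0, F.col (n - 1) (wordDrop w 1), F.col n w), ?_, ?_⟩, ?_⟩
  · intro w w'
    simp [F.zero (wordDrop w 1) (wordDrop w' 1), F.zero w w']
  · intro n n' w w' h hl
    simp only [Prod.mk.injEq, eq_iff_iff] at h ⊢
    refine ⟨by simp, ?_, F.succ _ _ _ _ h.2.2 hl⟩
    rcases Nat.eq_zero_or_pos n with rfl | hn
    · obtain rfl : n' = 0 := h.1.1 rfl
      exact F.zero _ _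
    · have hn' : n' ≠ 0 := fun h0 => hn.ne' (h.1.2 h0)
      have := F.succ _ _ _ _ h.2.1 (by
        simp only [wordDrop]
        rwa [Nat.sub_add_cancel hn, Nat.sub_add_cancel (by omega)])
      rwa [Nat.sub_add_cancel hn, Nat.sub_add_cancel (by omega)] at this
  · intro w w' a a' ha ha' h hw
    simp only [PrefixColoring.block, Prod.mk.injEq, eq_iff_iff] at h
    obtain ⟨j, h1, h2, h3, h4⟩ := ha.exists_first_block ha' fun i => (h i).1
    have hj := (h j).2.1
    simp only [h1, h3, wordDrop_zero, Nat.sub_zero] at hj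
    exact hF.drop ha ha' (fun i => (h i).2.2) h2 h4 hj hw

theorem Recognizable.drop {X : Set (ℕ → Γ)} (hX : Recognizable X) :
    ∀ i, Recognizable {w : ℕ → Γ | wordDrop w i ∈ X}
  | 0 => hX
  | i + 1 => by
    have := (hX.drop i).next
    simpa only [Set.mem_ofPred_eq, wordDrop_wordDrop] using this

theorem Recognizable.always {X : Set (ℕ → Γ)} (hX : Recognizable X) :
    Recognizable {w : ℕ → Γ | ∀ i, wordDrop w i ∈ X} := by
  obtain ⟨C, hC, F, hF⟩ := hX
  refine ⟨C × Set C, inferInstance,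
    ⟨fun n w => (F.col n w, {c | ∃ i < n, F.col (n - i) (wordDrop w i) = c}), ?_, ?_⟩, ?_⟩
  · intro w w'
    simp [F.zero w w']
  · intro n n' w w' h hl
    simp only [Prod.mk.injEq] at h ⊢
    refine ⟨F.succ _ _ _ _ h.1 hl, ?_⟩
    have key : ∀ {n n' : ℕ} {w w' : ℕ → Γ}, F.col n w = F.col n' w' → w n = w' n' →
        {c | ∃ i < n, F.col (n - i) (wordDrop w i) = c} ⊆
          {c | ∃ i < n', F.col (n' - i) (wordDrop w' i) = c} →
        {c | ∃ i < n + 1, F.col (n + 1 - i) (wordDrop w i) = c} ⊆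
          {c | ∃ i < n' + 1, F.col (n' + 1 - i) (wordDrop w' i) = c} := by
      rintro n n' w w' h0 hl hs _ ⟨i, hi, rfl⟩
      rcases Nat.lt_succ_iff_lt_or_eq.1 hi with hi | rfl
      · obtain ⟨i', hi', he⟩ := hs ⟨i, hi, rfl⟩
        refine ⟨i', by omega, ?_⟩
        rw [show n' + 1 - i' = n' - i' + 1 by omega, show n + 1 - i = n - i + 1 by omega]
        refine F.succ _ _ _ _ he ?_
        simp only [wordDrop]
        rw [Nat.sub_add_cancel hi.le, Nat.sub_add_cancel hi'.le, hl]
      · refine ⟨n', by omega, ?_⟩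
        rw [Nat.add_sub_cancel_left, Nat.add_sub_cancel_left]
        exact F.succ _ _ _ _ (F.zero _ _) (by simpa [wordDrop] using hl.symm)
    exact (key h.1 hl h.2.subset).antisymm (key h.1.symm hl.symm h.2.symm.subset)
  · intro w w' a a' ha ha' h hw p'
    simp only [PrefixColoring.block, Prod.mk.injEq] at h
    obtain ⟨j, h1, h2⟩ := ha'.exists_block p'
    obtain ⟨q, hq, he⟩ : F.col (a' (j + 1) - p') (wordDrop w' p') ∈
        {c | ∃ i < a (j + 1) - a j,
          F.col (a (j + 1) - a j - i) (wordDrop (wordDrop w (a j)) i) = c} := by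
      rw [(h j).2]
      refine ⟨p' - a' j, by omega, ?_⟩
      rw [wordDrop_wordDrop, Nat.sub_add_cancel h1]
      congr 1; omega
    rw [wordDrop_wordDrop, show a (j + 1) - a j - q = a (j + 1) - (q + a j) by omega] at he
    exact hF.drop ha ha' (fun i => (h i).1) (by omega) h2.le he (hw _)

theorem Recognizable.proj {X : Set (ℕ → Γ × B)} (hX : Recognizable X) :
    Recognizable {w : ℕ → Γ | ∃ z : ℕ → B, wordPair w z ∈ X} := by
  classical
  obtain ⟨C, hC, F, hF⟩ := hX
  refine ⟨Set C, inferInstance, ⟨fun n w => {c | ∃ z : ℕ → B, F.col n (wordPair w z) = c},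
    ?_, ?_⟩, ?_⟩
  · intro w w'
    ext c
    exact exists_congr fun z => by rw [F.zero (wordPair w z) (wordPair w' z)]
  · have key : ∀ {n n' : ℕ} {w w' : ℕ → Γ}, w n = w' n' →
        {c | ∃ z : ℕ → B, F.col n (wordPair w z) = c} ⊆
          {c | ∃ z : ℕ → B, F.col n' (wordPair w' z) = c} →
        {c | ∃ z : ℕ → B, F.col (n + 1) (wordPair w z) = c} ⊆
          {c | ∃ z : ℕ → B, F.col (n' + 1) (wordPair w' z) = c} := by
      rintro n n' w w' hl hs _ ⟨z, rfl⟩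
      obtain ⟨z', hz'⟩ := hs ⟨z, rfl⟩
      refine ⟨Function.update z' n' (z n), F.succ _ _ _ _ ?_ (by simp [wordPair, hl])⟩
      rw [← hz']
      refine F.congr _ fun i hi => ?_
      simp [wordPair, hi.ne]
    exact fun n n' w w' h hl => (key hl h.subset).antisymm (key hl.symm h.symm.subset)
  · rintro w w' a a' ha ha' h ⟨z, hz⟩
    have hb : ∀ i, ∃ y : ℕ → B, F.col (a' (i + 1) - a' i) (wordPair (wordDrop w' (a' i)) y) =
        F.block a (wordPair w z) i := fun i => by
      have : F.block a (wordPair w z) i ∈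
          {c | ∃ y : ℕ → B, F.col (a (i + 1) - a i) (wordPair (wordDrop w (a i)) y) = c} :=
        ⟨wordDrop z (a i), rfl⟩
      have hi := h i
      simp only [PrefixColoring.block] at hi
      rwa [hi] at this
    choose y hy using hb
    choose idx h1 h2 using ha'.exists_block
    refine ⟨fun p => y (idx p) (p - a' (idx p)), hF _ _ a a' ha ha' (fun i => ?_) hz⟩
    rw [← hy i]
    refine F.congr _ fun m hm => ?_
    have : idx (m + a' i) = i :=
      ha'.block_unique (h1 _) (h2 _) (Nat.le_add_left _ _) (by omega)
    simp [wordPair, wordDrop, this]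

theorem Recognizable.until {X Y : Set (ℕ → Γ)} (hX : Recognizable X) (hY : Recognizable Y) :
    Recognizable {w : ℕ → Γ | ∃ i, wordDrop w i ∈ Y ∧ ∀ j < i, wordDrop w j ∈ X} := by
  classical
  have hb : Recognizable {u : ℕ → Γ × Bool | (u 0).2 = true} :=
    Recognizable.first fun l : Γ × Bool => l.2 = true
  have hstep := (hb.compl.union
    ((hY.comap Prod.fst).union ((hX.comap Prod.fst).inter hb.next))).always
  convert ((hb.inter hstep).inter hb.always.compl).proj using 1
  ext w
  constructor
  · rintro ⟨i, hi, hj⟩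
    refine ⟨fun n => decide (n ≤ i), ⟨by simp [wordPair], fun n => ?_⟩, fun h => ?_⟩
    · rcases lt_trichotomy n i with hn | rfl | hn
      · exact Or.inr (Or.inr ⟨hj n hn, by simp [wordPair, wordDrop]; omega⟩)
      · exact Or.inr (Or.inl hi)
      · exact Or.inl (by simp [wordPair, wordDrop]; omega)
    · have := h (i + 1)
      simp [wordPair, wordDrop] at this
  · rintro ⟨b, ⟨h0, hs⟩, hn⟩
    have h0 : b 0 = true := h0
    have hs : ∀ n, b n = true → wordDrop w n ∈ Y ∨ (wordDrop w n ∈ X ∧ b (n + 1) = true) := by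
      intro n hbn
      rcases hs n with h | h | ⟨h, h'⟩
      · exact absurd (by simpa [wordPair, wordDrop] using hbn) h
      · exact Or.inl h
      · exact Or.inr ⟨h, by simpa [wordPair, wordDrop, add_comm] using h'⟩
    have hY : ∃ i, wordDrop w i ∈ Y := by
      by_contra! hY
      refine hn fun n => ?_
      have : b n = true := by
        induction n with
        | zero => exact h0
        | succ n ih => exact ((hs n ih).resolve_left (hY n)).2
      simpa [wordPair, wordDrop] using this
    refine ⟨Nat.find hY, Nat.find_spec hY, fun j hj => ?_⟩
    have : ∀ j < Nat.find hY, b j = true := by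
      intro j
      induction j with
      | zero => exact fun _ => h0
      | succ j ih =>
        intro hj
        exact ((hs j (ih (by omega))).resolve_left (Nat.find_min hY (by omega))).2
    exact ((hs j (this j hj)).resolve_left (Nat.find_min hY hj)).1

/-- Eventually periodic words. -/
def IsLassoWord (w : ℕ → Γ) : Prop := ∃ N c : ℕ, 0 < c ∧ ∀ n, N ≤ n → w (n + c) = w n

theorem IsLassoWord.map {w : ℕ → Γ} (hw : IsLassoWord w) (g : Γ → Γ') :
    IsLassoWord fun n => g (w n) := by
  obtain ⟨N, c, hc, h⟩ := hw
  exact ⟨N, c, hc, fun n hn => congrArg g (h n hn)⟩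

theorem eventually_periodic_mul {w : ℕ → Γ} {N c : ℕ} (h : ∀ n, N ≤ n → w (n + c) = w n)
    (l n : ℕ) (hn : N ≤ n) : w (n + c * l) = w n := by
  induction l with
  | zero => rfl
  | succ l ih => rw [Nat.mul_succ, ← add_assoc, h _ (by omega), ih]

theorem IsLassoWord.pair {w : ℕ → Γ} {z : ℕ → B} (hw : IsLassoWord w) (hz : IsLassoWord z) :
    IsLassoWord (wordPair w z) := by
  obtain ⟨N, c, hc, h⟩ := hw
  obtain ⟨N', c', hc', h'⟩ := hz
  refine ⟨max N N', c * c', Nat.mul_pos hc hc', fun n hn => ?_⟩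
  have h1 := eventually_periodic_mul h c' n (by omega)
  have h2 := eventually_periodic_mul h' c n (by omega)
  rw [mul_comm] at h2
  simp [wordPair, h1, h2]

/-- Along some infinite sequence, consecutive pairs all receive the same colour. -/
theorem exists_strictMono_consecutive_color [Finite C] (col : ℕ → ℕ → C) :
    ∃ (e : C) (n : ℕ → ℕ), StrictMono n ∧ ∀ i, col (n i) (n (i + 1)) = e := by
  have h1 : ∀ i, ∃ c, ∀ᶠ j in (Filter.hyperfilter ℕ : Filter ℕ), col i j = c := fun i =>
    Ultrafilter.eventually_exists_iff.1 (Filter.Eventually.of_forall fun j => ⟨_, rfl⟩)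
  choose c hc using h1
  obtain ⟨e, he⟩ : ∃ e, ∀ᶠ i in (Filter.hyperfilter ℕ : Filter ℕ), c i = e :=
    Ultrafilter.eventually_exists_iff.1 (Filter.Eventually.of_forall fun j => ⟨_, rfl⟩)
  have hnext : ∀ i : {i // c i = e}, ∃ j : {i // c i = e}, i.1 < j.1 ∧ col i j = e := by
    rintro ⟨i, hi⟩
    obtain ⟨j, ⟨hj, hj'⟩, hij⟩ := ((he.and (hc i)).and
      (Nat.hyperfilter_le_atTop (Filter.eventually_gt_atTop i))).exists
    exact ⟨⟨j, hj⟩, hij, hj'.trans hi⟩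
  choose f hf using hnext
  obtain ⟨i0, hi0⟩ := he.exists
  refine ⟨e, fun k => (f^[k] ⟨i0, hi0⟩).1, strictMono_nat_of_lt_succ fun k => ?_, fun k => ?_⟩
  · rw [Function.iterate_succ_apply']; exact (hf _).1
  · simp only [Function.iterate_succ_apply']; exact (hf _).2

/-- Extend a sequence by an initial zero. -/
def consZero (n : ℕ → ℕ) : ℕ → ℕ
  | 0 => 0
  | i + 1 => n i

/-- The word that follows `z` up to position `q + d` and then repeats the last `d` letters. -/
def loopWord (z : ℕ → B) (q d : ℕ) : ℕ → B := fun m => if m < q then z m else z (q + (m - q) % d)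

theorem loopWord_of_lt (z : ℕ → B) {q d m : ℕ} (h : m < q) : loopWord z q d m = z m := if_pos h

theorem loopWord_loop (z : ℕ → B) {q d r : ℕ} (k : ℕ) (h : r < d) :
    loopWord z q d (r + (q + k * d)) = z (r + q) := by
  rw [loopWord, if_neg (by omega), show r + (q + k * d) - q = r + k * d by omega,
    Nat.add_mul_mod_self_right, Nat.mod_eq_of_lt h, add_comm]

theorem loopWord_isLassoWord (z : ℕ → B) {q d : ℕ} (h : 0 < d) : IsLassoWord (loopWord z q d) := by
  refine ⟨q, d, h, fun n hn => ?_⟩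
  rw [loopWord, loopWord, if_neg (by omega), if_neg (by omega),
    show n + d - q = n - q + d by omega, Nat.add_mod_right]

theorem Recognizable.exists_lasso {X : Set (ℕ → Γ × B)} (hX : Recognizable X) {w : ℕ → Γ}
    (hw : IsLassoWord w) {z : ℕ → B} (hz : wordPair w z ∈ X) :
    ∃ z' : ℕ → B, IsLassoWord z' ∧ wordPair w z' ∈ X := by
  obtain ⟨C, hC, F, hF⟩ := hX
  obtain ⟨N, c, hc, hper⟩ := hw
  obtain ⟨e, n, hn, he⟩ := exists_strictMono_consecutive_color fun i j =>
    F.col (N + 1 + c * j - (N + 1 + c * i)) (wordDrop (wordPair w z) (N + 1 + c * i))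
  set a : ℕ → ℕ := fun i => N + 1 + c * n i with ha
  have hmono : StrictMono a := fun i j hij =>
    Nat.add_lt_add_left (Nat.mul_lt_mul_of_pos_left (hn hij) hc) _
  set q := a 0
  obtain ⟨l, hl⟩ : ∃ l, n 1 = n 0 + l := Nat.exists_eq_add_of_le (hn.monotone zero_le_one)
  have hd : a 1 - a 0 = c * l := by simp only [ha, hl, mul_add]; omega
  have hdpos : 0 < c * l := by have := hmono (zero_lt_one); omega
  have hcut : IsCut (consZero a) := by
    refine .of_strictMono rfl (strictMono_nat_of_lt_succ ?_)
    rintro (_ | i)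
    · exact show 0 < N + 1 + c * n 0 by omega
    · exact hmono (Nat.lt_succ_self i)
  have hcut' : IsCut (consZero fun k => q + k * (c * l)) := by
    refine .of_strictMono rfl (strictMono_nat_of_lt_succ ?_)
    rintro (_ | i)
    · exact show 0 < N + 1 + c * n 0 + 0 * (c * l) by omega
    · simp only [consZero, add_mul]; omega
  refine ⟨loopWord z q (c * l), loopWord_isLassoWord z hdpos, hF _ _ _ _ hcut hcut' ?_ hz⟩
  rintro (_ | i)
  · simp only [PrefixColoring.block, consZero, wordDrop_zero, zero_mul, add_zero, Nat.sub_zero]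
    exact F.congr _ fun i hi => by
      simp only [wordPair, loopWord_of_lt z (show i < q from hi)]
  · simp only [PrefixColoring.block, consZero]
    refine (he i).trans ((he 0).symm.trans ?_)
    rw [show q + (i + 1) * (c * l) - (q + i * (c * l)) = c * l by rw [add_mul]; omega]
    change F.col (a 1 - a 0) _ = _
    rw [hd]
    refine F.congr _ fun r hr => ?_
    have hw' : w (r + (q + i * (c * l))) = w (r + q) := by
      rw [show r + (q + i * (c * l)) = r + q + c * (l * i) by ring]
      exact eventually_periodic_mul hper _ _ (by simp only [q, ha]; omega)
    simp only [wordPair, wordDrop, loopWord_loop z i hr, hw']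
    rfl

/-- States of the automaton of a colouring: the colour required for the current block, the
colour required for all later blocks, the colour of the current block read so far, and whether
a block was just completed. -/
abbrev BlockState (C : Type) : Type := C × C × C × Bool

/-- The Büchi automaton guessing a factorization with first block coloured `s` and all other
blocks coloured `e`, for a pair `(s, e)` realized by some word of `X`. -/
def blockNBA [Finite C] (F : PrefixColoring Γ C) (X : Set (ℕ → Γ)) : NBA Γ where
  Q := BlockState C
  finQ := Fintype.ofFinite _
  init := {q | (∃ w ∈ X, ∃ a, IsCut a ∧ F.block a w 0 = q.1 ∧ ∀ i, F.block a w (i + 1) = q.2.1) ∧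
    (∃ w, F.col 0 w = q.2.2.1) ∧ q.2.2.2 = false}
  δ q l := {q' | ∃ n w, F.col n w = q.2.2.1 ∧ w n = l ∧
    (q' = (q.1, q.2.1, F.col (n + 1) w, false) ∨
      (F.col (n + 1) w = q.1 ∧ q' = (q.2.1, q.2.1, F.col 0 w, true)))}
  acc := {q | q.2.2.2 = true}

theorem blockNBA_accepts_of_mem [Finite C] (F : PrefixColoring Γ C) {X : Set (ℕ → Γ)} {w : ℕ → Γ}
    (hw : w ∈ X) : (blockNBA F X).Accepts w := by
  classical
  obtain ⟨e, n, hn, he⟩ := exists_strictMono_consecutive_color fun i j =>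
    F.col (j + 1 - (i + 1)) (wordDrop w (i + 1))
  set a : ℕ → ℕ := consZero fun i => n i + 1 with ha
  have hmono : StrictMono a := by
    refine strictMono_nat_of_lt_succ ?_
    rintro (_ | i)
    · exact Nat.succ_pos _
    · exact Nat.succ_lt_succ (hn (Nat.lt_succ_self i))
  have hcut : IsCut a := .of_strictMono rfl hmono
  have hblock : ∀ i, F.block a w (i + 1) = e := he
  choose idx h1 h2 using hcut.exists_block
  have hidx : ∀ {p i}, a i ≤ p → p < a (i + 1) → idx p = i := fun h h' =>
    hcut.block_unique (h1 _) (h2 _) h h'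
  have hidx0 : idx 0 = 0 := hidx le_rfl (hmono zero_lt_one)
  refine ⟨fun p => (F.block a w (idx p), e, F.col (p - a (idx p)) (wordDrop w (a (idx p))),
    decide (0 < idx p ∧ p = a (idx p))), ⟨⟨w, hw, a, hcut, ?_, hblock⟩, ⟨w, ?_⟩, ?_⟩, ?_, ?_⟩
  · simp [hidx0]
  · simp only [hidx0]; exact F.zero _ _
  · simp [hidx0]
  · intro p
    have hp1 := h1 p
    have hp2 := h2 p
    refine ⟨p - a (idx p), wordDrop w (a (idx p)), rfl, ?_, ?_⟩
    · simp only [wordDrop, Nat.sub_add_cancel hp1]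
    rcases Nat.lt_or_ge (p + 1) (a (idx p + 1)) with h | h
    · left
      have : idx (p + 1) = idx p := hidx (by omega) h
      simp only [this, Prod.mk.injEq, true_and]
      refine ⟨by rw [Nat.sub_add_comm hp1], ?_⟩
      rw [decide_eq_false_iff_not]
      omega
    · right
      have hp : p + 1 = a (idx p + 1) := by omega
      have : idx (p + 1) = idx p + 1 := hidx hp.ge (hp ▸ hmono (Nat.lt_succ_self _))
      refine ⟨?_, ?_⟩
      · simp only [PrefixColoring.block]
        rw [← hp, Nat.sub_add_comm hp1]
      · simp only [this, Prod.mk.injEq, hblock, true_and, ← hp, Nat.sub_self]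
        exact ⟨F.zero _ _, by simp⟩
  · intro N
    have hi : idx (a (N + 1)) = N + 1 := hidx le_rfl (hmono (Nat.lt_succ_self _))
    refine ⟨a (N + 1), ((Nat.le_succ N).trans (hmono.le_apply)), ?_⟩
    change decide (0 < idx (a (N + 1)) ∧ a (N + 1) = a (idx (a (N + 1)))) = true
    simp [hi]

theorem mem_of_blockNBA_accepts [Finite C] {F : PrefixColoring Γ C} {X : Set (ℕ → Γ)}
    (hF : F.Saturates X) {w : ℕ → Γ} (hw : (blockNBA F X).Accepts w) : w ∈ X := by
  classical
  obtain ⟨r, ⟨⟨x, hx, a, ha, hs, he⟩, hc0, -⟩, hstep, hacc⟩ := hw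
  have hacc' : ∀ p, ∃ m, p < m ∧ (r m).2.2.2 = true := fun p => by
    obtain ⟨m, hm, h⟩ := hacc (p + 1)
    exact ⟨m, hm, h⟩
  obtain ⟨e, hee⟩ : ∃ e, (r 0).2.1 = e := ⟨_, rfl⟩
  have hblock : ∀ p t, (r p).1 = t → (r p).2.1 = e → (∃ u, F.col 0 u = (r p).2.2.1) →
      F.col (Nat.find (hacc' p) - p) (wordDrop w p) = t ∧ (r (Nat.find (hacc' p))).1 = e ∧
      (r (Nat.find (hacc' p))).2.1 = e ∧ ∃ u, F.col 0 u = (r (Nat.find (hacc' p))).2.2.1 := by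
    rintro p t ht hep ⟨u, hu⟩
    have hinv : ∀ m, p + m < Nat.find (hacc' p) → (r (p + m)).1 = t ∧ (r (p + m)).2.1 = e ∧
        (r (p + m)).2.2.1 = F.col m (wordDrop w p) := by
      intro m
      induction m with
      | zero => exact fun _ => ⟨ht, hep, hu ▸ F.zero _ _⟩
      | succ m ih =>
        intro hm
        obtain ⟨i1, i2, i3⟩ := ih (by omega)
        obtain ⟨n, u, hnu, hl, h | ⟨-, h⟩⟩ := hstep (p + m)
        · rw [← add_assoc, h]
          exact ⟨i1, i2, F.succ _ _ _ _ (hnu.trans i3) (hl.trans (by simp [wordDrop, add_comm]))⟩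
        · exact absurd ⟨by omega, by rw [← add_assoc, h]⟩ (Nat.find_min (hacc' p) hm)
    obtain ⟨hlt, hflag⟩ := Nat.find_spec (hacc' p)
    obtain ⟨m, hm⟩ : ∃ m, Nat.find (hacc' p) = p + m + 1 :=
      ⟨Nat.find (hacc' p) - p - 1, by omega⟩
    obtain ⟨i1, i2, i3⟩ := hinv m (by omega)
    rw [hm] at hflag ⊢
    obtain ⟨n, u, hnu, hl, h | ⟨ht', h⟩⟩ := hstep (p + m)
    · rw [h] at hflag
      exact absurd hflag (by simp)
    · rw [h]
      refine ⟨?_, i2, i2, u, rfl⟩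
      rw [show p + m + 1 - p = m + 1 by omega, ← i1, ← ht']
      exact F.succ _ _ _ _ (i3.symm.trans hnu.symm) (by simp [hl, wordDrop, add_comm])
  set b : ℕ → ℕ := fun i => (fun p => Nat.find (hacc' p))^[i] 0 with hb
  have hbs : ∀ i, b (i + 1) = Nat.find (hacc' (b i)) := fun i =>
    Function.iterate_succ_apply' _ _ _
  have hcut : IsCut b := .of_strictMono rfl
    (strictMono_nat_of_lt_succ fun i => by rw [hbs]; exact (Nat.find_spec (hacc' (b i))).1)
  have hinv : ∀ i, (r (b (i + 1))).1 = e ∧ (r (b (i + 1))).2.1 = e ∧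
      ∃ u, F.col 0 u = (r (b (i + 1))).2.2.1 := by
    intro i
    induction i with
    | zero => rw [hbs]; exact (hblock 0 _ rfl hee hc0).2
    | succ i ih => rw [hbs]; exact (hblock _ _ ih.1 ih.2.1 ih.2.2).2
  refine hF x w a b ha hcut ?_ hx
  rintro (_ | i)
  · rw [hs, PrefixColoring.block, hbs]
    exact (hblock 0 _ rfl hee hc0).1.symm
  · rw [he, hee, PrefixColoring.block, hbs (i + 1)]
    exact (hblock _ _ (hinv i).1 (hinv i).2.1 (hinv i).2.2).1.symm

theorem Recognizable.exists_nba {X : Set (ℕ → Γ)} (hX : Recognizable X) :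
    ∃ A : NBA Γ, ∀ w, A.Accepts w ↔ w ∈ X := by
  obtain ⟨C, hC, F, hF⟩ := hX
  exact ⟨blockNBA F X, fun w => ⟨mem_of_blockNBA_accepts hF, blockNBA_accepts_of_mem F⟩⟩

end Recognizable

/-! ### Satisfaction values of quantifier-free formulas -/

theorem lt_prefMin {g : ℕ → ℝ} {v : ℝ} {i : ℕ} (h : v < prefMin g i) : ∀ j < i, v < g j := by
  induction i with
  | zero => simp
  | succ i ih =>
    intro j hj
    have h := lt_min_iff.1 h
    rcases Nat.lt_succ_iff_lt_or_eq.1 hj with hj | rfl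
    · exact ih h.1 j hj
    · exact h.2

theorem le_prefMin {g : ℕ → ℝ} {v : ℝ} {i : ℕ} (hv : v ≤ 1) (h : ∀ j < i, v ≤ g j) :
    v ≤ prefMin g i := by
  induction i with
  | zero => exact hv
  | succ i ih => exact le_min (ih fun j hj => h j (by omega)) (h i (by omega))

/-- The common shape of the values of the discounted and undiscounted until operators. -/
def untilValue (g f : ℕ → ℝ) : ℝ := ⨆ i : ℕ, min (f i) (prefMin g i)

theorem le_untilValue {g f : ℕ → ℝ} {v : ℝ} (hf : ∀ i, f i ≤ 1) (hv : v ≤ 1) {i : ℕ}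
    (hi : v ≤ f i) (hj : ∀ j < i, v ≤ g j) : v ≤ untilValue g f :=
  le_ciSup_of_le ⟨1, by rintro _ ⟨i, rfl⟩; exact min_le_of_left_le (hf i)⟩ i
    (le_min hi (le_prefMin hv hj))

theorem exists_of_lt_untilValue {g f : ℕ → ℝ} {v : ℝ} (h : v < untilValue g f) :
    ∃ i, v < f i ∧ ∀ j < i, v < g j := by
  obtain ⟨i, hi⟩ := exists_lt_of_lt_ciSup h
  exact ⟨i, (lt_min_iff.1 hi).1, lt_prefMin (lt_min_iff.1 hi).2⟩

theorem untilValue_mem_Icc {g f : ℕ → ℝ} (hf : ∀ i, f i ∈ Set.Icc (0 : ℝ) 1) :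
    untilValue g f ∈ Set.Icc (0 : ℝ) 1 :=
  ⟨le_untilValue (fun i => (hf i).2) zero_le_one (hf 0).1 (by simp),
    ciSup_le fun i => min_le_of_left_le (hf i).2⟩

theorem IsDiscounting.pos {η : ℕ → ℝ} (hη : IsDiscounting η) (i : ℕ) : 0 < η i :=
  (hη.2.1 (i + 1)).1.trans_lt (hη.1 (Nat.lt_succ_self i))

theorem mul_mem_Icc_zero_one {a b : ℝ} (ha : a ∈ Set.Icc (0 : ℝ) 1) (hb : b ∈ Set.Icc (0 : ℝ) 1) :
    a * b ∈ Set.Icc (0 : ℝ) 1 :=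
  ⟨mul_nonneg ha.1 hb.1, mul_le_one₀ ha.2 hb.1 hb.2⟩

theorem tsemQF_mem_Icc {η : D → ℕ → ℝ} (hη : ∀ d, IsDiscounting (η d)) (φ : TQF AP Var D)
    (ρ : Var → Trace AP) (T : Set (Trace AP)) : tsemQF η φ ρ T ∈ Set.Icc (0 : ℝ) 1 := by
  induction φ generalizing ρ with
  | atom p π => exact (ρ π 0 p).2
  | neg φ ih =>
    have := ih ρ
    exact ⟨sub_nonneg.2 this.2, sub_le_self _ this.1⟩
  | or φ₁ φ₂ ih₁ ih₂ => exact ⟨le_max_of_le_left (ih₁ ρ).1, max_le (ih₁ ρ).2 (ih₂ ρ).2⟩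
  | next φ ih => exact ih _
  | untl φ₁ φ₂ ih₁ ih₂ => exact untilValue_mem_Icc fun i => ih₂ _
  | untlD d φ₁ φ₂ ih₁ ih₂ =>
    exact untilValue_mem_Icc fun i => mul_mem_Icc_zero_one ((hη d).2.1 i) (ih₂ _)

theorem tsemQF_congr (η : D → ℕ → ℝ) (φ : TQF AP Var D) {ρ ρ' : Var → Trace AP}
    (T T' : Set (Trace AP)) (h : ∀ x ∈ varsTQF φ, ρ x = ρ' x) :
    tsemQF η φ ρ T = tsemQF η φ ρ' T' := by
  have hs : ∀ {s : Set Var} {ρ ρ' : Var → Trace AP}, (∀ x ∈ s, ρ x = ρ' x) →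
      ∀ i, ∀ x ∈ s, shiftA ρ i x = shiftA ρ' i x := fun h i x hx =>
    funext fun n => congrFun (h x hx) _
  induction φ generalizing ρ ρ' with
  | atom p π => simp only [tsemQF, h π rfl]
  | neg φ ih => simp only [tsemQF, ih h]
  | or φ₁ φ₂ ih₁ ih₂ =>
    simp only [tsemQF, ih₁ fun x hx => h x (Or.inl hx), ih₂ fun x hx => h x (Or.inr hx)]
  | next φ ih => exact ih (hs h 1)
  | untl φ₁ φ₂ ih₁ ih₂ | untlD d φ₁ φ₂ ih₁ ih₂ =>
    have e₁ := fun i => ih₁ (hs (fun x hx => h x (Or.inl hx)) i)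
    have e₂ := fun i => ih₂ (hs (fun x hx => h x (Or.inr hx)) i)
    simp only [tsemQF, e₁, e₂]

section Separable

variable {Γ : Type}

/-- The value `f` can be compared with the threshold `v` by a recognizable language, up to
strictness of the comparison. -/
def Separable (f : (ℕ → Γ) → ℝ) (v : ℝ) : Prop :=
  ∃ X : Set (ℕ → Γ), Recognizable X ∧ ∀ w, (v < f w → w ∈ X) ∧ (w ∈ X → v ≤ f w)

theorem Separable.of_interior {f : (ℕ → Γ) → ℝ} {v : ℝ} (hf : ∀ w, f w ∈ Set.Icc (0 : ℝ) 1)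
    (h : 0 < v → v < 1 → Separable f v) : Separable f v := by
  rcases le_or_gt v 0 with h0 | h0
  · exact ⟨_, Recognizable.univ, fun w => ⟨fun _ => trivial, fun _ => h0.trans (hf w).1⟩⟩
  rcases le_or_gt 1 v with h1 | h1
  · exact ⟨_, Recognizable.empty, fun w => ⟨fun h => absurd (h1.trans_lt h) (hf w).2.not_gt,
      fun h => absurd h (Set.notMem_empty w)⟩⟩
  · exact h h0 h1

theorem Separable.one_sub {f : (ℕ → Γ) → ℝ} {v : ℝ} (hf : Separable f (1 - v)) :
    Separable (fun w => 1 - f w) v := by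
  obtain ⟨X, hX, h⟩ := hf
  refine ⟨_, hX.compl, fun w => ⟨fun hv hw => ?_, fun hw => ?_⟩⟩
  · have := (h w).2 hw; linarith
  · have := not_lt.1 fun hlt => hw ((h w).1 hlt); linarith

theorem Separable.max {f g : (ℕ → Γ) → ℝ} {v : ℝ} (hf : Separable f v) (hg : Separable g v) :
    Separable (fun w => max (f w) (g w)) v := by
  obtain ⟨X, hX, h⟩ := hf
  obtain ⟨Y, hY, h'⟩ := hg
  exact ⟨_, hX.union hY, fun w => ⟨fun hv => (lt_max_iff.1 hv).imp (h w).1 (h' w).1,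
    fun hw => le_max_iff.2 (hw.imp (h w).2 (h' w).2)⟩⟩

theorem Separable.drop {f : (ℕ → Γ) → ℝ} {v : ℝ} (hf : Separable f v) (i : ℕ) :
    Separable (fun w => f (wordDrop w i)) v := by
  obtain ⟨X, hX, h⟩ := hf
  exact ⟨_, hX.drop i, fun w => h (wordDrop w i)⟩

theorem Separable.const_mul {f : (ℕ → Γ) → ℝ} {v c : ℝ} (hc : 0 < c) (hf : Separable f (v / c)) :
    Separable (fun w => c * f w) v := by
  obtain ⟨X, hX, h⟩ := hf
  refine ⟨X, hX, fun w => ⟨fun hv => (h w).1 ((div_lt_iff₀' hc).2 hv), fun hw => ?_⟩⟩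
  exact (div_le_iff₀' hc).1 ((h w).2 hw)

theorem Separable.until {f g : (ℕ → Γ) → ℝ} {v : ℝ} (hg1 : ∀ w, g w ∈ Set.Icc (0 : ℝ) 1)
    (hf : Separable f v) (hg : Separable g v) :
    Separable (fun w => untilValue (fun j => f (wordDrop w j)) fun i => g (wordDrop w i)) v := by
  refine .of_interior (fun w => untilValue_mem_Icc fun i => hg1 _) fun _ hv1 => ?_
  obtain ⟨X, hX, h⟩ := hf
  obtain ⟨Y, hY, h'⟩ := hg
  refine ⟨_, hX.until hY, fun w => ⟨fun hv => ?_, ?_⟩⟩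
  · obtain ⟨i, hi, hj⟩ := exists_of_lt_untilValue hv
    exact ⟨i, (h' _).1 hi, fun j hji => (h _).1 (hj j hji)⟩
  · rintro ⟨i, hi, hj⟩
    exact le_untilValue (fun i => (hg1 _).2) hv1.le ((h' _).2 hi) fun j hji => (h _).2 (hj j hji)

theorem Separable.until_discounted {f g : (ℕ → Γ) → ℝ} {v : ℝ} {η : ℕ → ℝ} (hη : IsDiscounting η)
    (hg1 : ∀ w, g w ∈ Set.Icc (0 : ℝ) 1) (hf : ∀ v, Separable f v) (hg : ∀ v, Separable g v) :
    Separable (fun w => untilValue (fun j => η j * f (wordDrop w j))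
      fun i => η i * g (wordDrop w i)) v := by
  have hterm : ∀ w i, η i * g (wordDrop w i) ∈ Set.Icc (0 : ℝ) 1 := fun w i =>
    mul_mem_Icc_zero_one (hη.2.1 i) (hg1 _)
  refine .of_interior (fun w => untilValue_mem_Icc (hterm w)) fun hv0 hv1 => ?_
  have hf' : ∀ i, Separable (fun w => η i * f (wordDrop w i)) v := fun i =>
    ((hf _).drop i).const_mul (hη.pos i)
  have hg' : ∀ i, Separable (fun w => η i * g (wordDrop w i)) v := fun i =>
    ((hg _).drop i).const_mul (hη.pos i)
  choose X hX hXf using hf'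
  choose Y hY hYg using hg'
  obtain ⟨N, hN⟩ := (hη.2.2.eventually (gt_mem_nhds hv0)).exists
  refine ⟨⋃ i : Fin N, Y i ∩ ⋂ j : Fin i, X j,
    .iUnion fun i => (hY i).inter (.iInter fun j => hX j), fun w => ⟨fun hv => ?_, fun hw => ?_⟩⟩
  · obtain ⟨i, hi, hj⟩ := exists_of_lt_untilValue hv
    have hiN : i < N := by
      by_contra! hle
      have h1 := hη.1.antitone hle
      have h2 := mul_le_of_le_one_right (hη.pos i).le (hg1 (wordDrop w i)).2
      linarith
    exact Set.mem_iUnion.2 ⟨⟨i, hiN⟩, (hYg i w).1 hi,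
      Set.mem_iInter.2 fun j => (hXf j w).1 (hj j j.2)⟩
  · obtain ⟨i, hi, hj⟩ := Set.mem_iUnion.1 hw
    exact le_untilValue (fun i => (hterm w i).2) hv1.le ((hYg i w).2 hi) fun j hji =>
      (hXf j w).2 (Set.mem_iInter.1 hj ⟨j, hji⟩)

end Separable

/-- The trace assignment encoded by a word of valuations. -/
def assignOf (w : ℕ → Var → AP → unitInterval) : Var → Trace AP := fun x n => w n x

theorem separable_tsemQF {η : D → ℕ → ℝ} (hη : ∀ d, IsDiscounting (η d)) (φ : TQF AP Var D)
    (T : Set (Trace AP)) (v : ℝ) : Separable (fun w => tsemQF η φ (assignOf w) T) v := by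
  induction φ generalizing v with
  | atom p π =>
    exact ⟨_, Recognizable.first fun l : Var → AP → unitInterval => v < l π p,
      fun w => ⟨id, fun h => le_of_lt h⟩⟩
  | neg φ ih => exact (ih _).one_sub
  | or φ₁ φ₂ ih₁ ih₂ => exact (ih₁ v).max (ih₂ v)
  | next φ ih => exact (ih v).drop 1
  | untl φ₁ φ₂ ih₁ ih₂ =>
    exact Separable.until (fun w => tsemQF_mem_Icc hη φ₂ _ T) (ih₁ v) (ih₂ v)
  | untlD d φ₁ φ₂ ih₁ ih₂ =>
    exact Separable.until_discounted (hη d) (fun w => tsemQF_mem_Icc hη φ₂ _ T) ih₁ ih₂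

/-! ### Paths of Kripke structures -/

/-- The initial paths of a Kripke structure. -/
def Kripke.paths (K : Kripke AP) : Set (ℕ → K.S) :=
  {s | s 0 ∈ K.init ∧ ∀ i, K.tr (s i) (s (i + 1))}

theorem Kripke.mem_traces_iff {K : Kripke AP} {t : Trace AP} :
    t ∈ K.Traces ↔ ∃ s ∈ K.paths, (fun n => K.L (s n)) = t := by
  constructor
  · rintro ⟨s, h0, hs, ht⟩
    exact ⟨s, ⟨h0, hs⟩, funext fun n => funext fun p => (ht n p).symm⟩
  · rintro ⟨s, ⟨h0, hs⟩, rfl⟩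
    exact ⟨s, h0, hs, fun _ _ => rfl⟩

theorem Kripke.recognizable_paths (K : Kripke AP) : Recognizable K.paths := by
  have := K.finS
  have hstep := (Recognizable.iInter fun x : K.S =>
    (Recognizable.first fun y : K.S => y ≠ x).union
      (Recognizable.first fun y : K.S => K.tr x y).next).always
  convert (Recognizable.first fun y : K.S => y ∈ K.init).inter hstep using 1
  ext s
  refine and_congr Iff.rfl (forall_congr' fun i => ?_)
  rw [Set.mem_iInter]
  constructor
  · intro h x
    by_cases hx : s i = x
    · exact Or.inr (by simpa [wordDrop, ← hx, add_comm] using h)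
    · exact Or.inl (by simpa [wordDrop] using hx)
  · intro h
    rcases h (s i) with h | h
    · exact absurd (by simp [wordDrop]) h
    · simpa [wordDrop, add_comm] using h

theorem Kripke.recognizable_traces (K : Kripke AP) : Recognizable K.Traces := by
  convert ((K.recognizable_paths.comap (Prod.snd : (AP → unitInterval) × K.S → K.S)).inter
    (Recognizable.first fun l : (AP → unitInterval) × K.S => K.L l.2 = l.1).always).proj using 1
  ext t
  rw [K.mem_traces_iff]
  refine exists_congr fun s => and_congr Iff.rfl ?_
  rw [funext_iff]
  exact forall_congr' fun n => by simp [wordDrop, wordPair]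

/-- The word of valuations obtained from `w` by assigning to `π` the trace of the path `s`. -/
def updateWord [DecidableEq Var] (K : Kripke AP) (π : Var) (w : ℕ → Var → AP → unitInterval)
    (s : ℕ → K.S) : ℕ → Var → AP → unitInterval :=
  fun n => Function.update (w n) π (K.L (s n))

theorem assignOf_updateWord [DecidableEq Var] (K : Kripke AP) (π : Var)
    (w : ℕ → Var → AP → unitInterval) (s : ℕ → K.S) :
    assignOf (updateWord K π w s) = Function.update (assignOf w) π fun n => K.L (s n) := by
  funext x n
  by_cases hx : x = π
  · subst hx; simp [assignOf, updateWord]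
  · simp [assignOf, updateWord, hx]

theorem isLassoWord_updateWord [DecidableEq Var] {K : Kripke AP} (π : Var)
    {w : ℕ → Var → AP → unitInterval} (hw : IsLassoWord w) {s : ℕ → K.S}
    (hs : IsLassoWord fun n => K.L (s n)) : IsLassoWord (updateWord K π w s) :=
  (hw.pair hs).map fun l => Function.update l.1 π l.2

/-- The words that are mapped into `X` by some update of `π` along a path of `K`. -/
def existsUpdate [DecidableEq Var] (K : Kripke AP) (π : Var)
    (X : Set (ℕ → Var → AP → unitInterval)) : Set (ℕ → Var → AP → unitInterval) :=
  {w | ∃ s ∈ K.paths, updateWord K π w s ∈ X}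

theorem recognizable_updateWord [DecidableEq Var] (K : Kripke AP) (π : Var)
    {X : Set (ℕ → Var → AP → unitInterval)} (hX : Recognizable X) :
    Recognizable {u : ℕ → (Var → AP → unitInterval) × K.S |
      (fun n => (u n).2) ∈ K.paths ∧
        updateWord K π (fun n => (u n).1) (fun n => (u n).2) ∈ X} :=
  (K.recognizable_paths.comap Prod.snd).inter
    (hX.comap fun l : (Var → AP → unitInterval) × K.S => Function.update l.1 π (K.L l.2))

theorem recognizable_existsUpdate [DecidableEq Var] (K : Kripke AP) (π : Var)
    {X : Set (ℕ → Var → AP → unitInterval)} (hX : Recognizable X) :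
    Recognizable (existsUpdate K π X) :=
  (recognizable_updateWord K π hX).proj

theorem exists_lasso_of_mem_existsUpdate [DecidableEq Var] {K : Kripke AP} {π : Var}
    {X : Set (ℕ → Var → AP → unitInterval)} (hX : Recognizable X)
    {w : ℕ → Var → AP → unitInterval} (hw : IsLassoWord w) (h : w ∈ existsUpdate K π X) :
    ∃ s ∈ K.paths, IsLassoWord (fun n => K.L (s n)) ∧ updateWord K π w s ∈ X := by
  obtain ⟨s, hs⟩ := h
  obtain ⟨s', hl, hs'⟩ := (recognizable_updateWord K π hX).exists_lasso hw (z := s) hs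
  exact ⟨s', hs'.1, hl.map K.L, hs'.2⟩

theorem Kripke.lassos_nonempty {K : Kripke AP} (h : K.Traces.Nonempty) : K.Lassos.Nonempty := by
  obtain ⟨t, ht⟩ := h
  obtain ⟨s, hs, -⟩ := K.mem_traces_iff.1 ht
  obtain ⟨s', hl, hs'⟩ := (K.recognizable_paths.comap (Prod.snd : Unit × K.S → K.S)).exists_lasso
    (w := fun _ => ()) ⟨0, 1, one_pos, fun _ _ => rfl⟩ (z := s) hs
  exact ⟨_, K.mem_traces_iff.2 ⟨s', hs', rfl⟩, hl.map K.L⟩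

/-! ### Satisfaction values of quantified formulas -/

theorem tsem_mem_Icc [DecidableEq Var] {η : D → ℕ → ℝ} (hη : ∀ d, IsDiscounting (η d))
    (ψ : TForm AP Var D) (ρ : Var → Trace AP) (T : Set (Trace AP)) :
    tsem η ψ ρ T ∈ Set.Icc (0 : ℝ) 1 := by
  induction ψ generalizing ρ with
  | qf φ => exact tsemQF_mem_Icc hη φ ρ T
  | ex π ψ ih =>
    refine ⟨Real.sSup_nonneg ?_, Real.sSup_le ?_ zero_le_one⟩ <;> rintro _ ⟨t, -, rfl⟩
    exacts [(ih _).1, (ih _).2]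
  | all π ψ ih =>
    refine ⟨Real.sInf_nonneg ?_, ?_⟩
    · rintro _ ⟨t, -, rfl⟩
      exact (ih _).1
    · rcases T.eq_empty_or_nonempty with rfl | ⟨t, ht⟩
      · simp [tsem]
      · refine csInf_le_of_le ⟨0, ?_⟩ ⟨t, ht, rfl⟩ (ih _).2
        rintro _ ⟨t, -, rfl⟩
        exact (ih _).1

theorem tsem_congr [DecidableEq Var] (η : D → ℕ → ℝ) (ψ : TForm AP Var D)
    {ρ ρ' : Var → Trace AP} (T : Set (Trace AP)) (h : ∀ x ∈ freeVars ψ, ρ x = ρ' x) :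
    tsem η ψ ρ T = tsem η ψ ρ' T := by
  have hu : ∀ {s : Set Var} {ρ ρ' : Var → Trace AP} {π : Var}, (∀ x ∈ s \ {π}, ρ x = ρ' x) →
      ∀ t, ∀ x ∈ s, Function.update ρ π t x = Function.update ρ' π t x := by
    intro s ρ ρ' π h t x hx
    by_cases hxπ : x = π
    · subst hxπ; simp
    · simp [hxπ, h x ⟨hx, hxπ⟩]
  induction ψ generalizing ρ ρ' with
  | qf φ => exact tsemQF_congr η φ T T h
  | ex π ψ ih | all π ψ ih => simp only [tsem, ih (hu h _)]

/-- `X` separates the words of value above `v` from those of value below `v`, both for the values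
over all traces and, on lassos, for the values over lassos. -/
structure IsThreshold {Γ : Type} (X : Set (ℕ → Γ)) (v : ℝ) (f g : (ℕ → Γ) → ℝ) : Prop where
  mem_of_lt : ∀ w, v < f w → w ∈ X
  le_of_mem : ∀ w, w ∈ X → v ≤ f w
  lasso_le_of_mem : ∀ w, IsLassoWord w → w ∈ X → v ≤ g w
  lasso_le_of_notMem : ∀ w, IsLassoWord w → w ∉ X → g w ≤ v

theorem exists_isThreshold_const {Γ : Type} (v c : ℝ) :
    ∃ X : Set (ℕ → Γ), Recognizable X ∧ IsThreshold X v (fun _ => c) fun _ => c := by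
  rcases le_or_gt v c with h | h
  · exact ⟨_, .univ, fun _ _ => trivial, fun _ _ => h, fun _ _ _ => h,
      fun w _ hw => absurd (Set.mem_univ w) hw⟩
  · exact ⟨_, .empty, fun _ h' => absurd h' h.not_gt, fun w hw => absurd hw (Set.notMem_empty w),
      fun w _ hw => absurd hw (Set.notMem_empty w), fun _ _ _ => h.le⟩

theorem exists_isThreshold [DecidableEq Var] {η : D → ℕ → ℝ} (hη : ∀ d, IsDiscounting (η d))
    (K : Kripke AP) (ψ : TForm AP Var D) (v : ℝ) :
    ∃ X : Set (ℕ → Var → AP → unitInterval), Recognizable X ∧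
      IsThreshold X v (fun w => tsem η ψ (assignOf w) K.Traces)
        fun w => tsem η ψ (assignOf w) K.Lassos := by
  have hbdd : ∀ (ψ : TForm AP Var D) (π : Var) (ρ : Var → Trace AP) (T : Set (Trace AP)),
      BddAbove ((fun t => tsem η ψ (Function.update ρ π t) T) '' T) ∧
        BddBelow ((fun t => tsem η ψ (Function.update ρ π t) T) '' T) := fun ψ π ρ T =>
    ⟨⟨1, by rintro _ ⟨t, -, rfl⟩; exact (tsem_mem_Icc hη _ _ _).2⟩,
      ⟨0, by rintro _ ⟨t, -, rfl⟩; exact (tsem_mem_Icc hη _ _ _).1⟩⟩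
  have hempty : K.Traces = ∅ → K.Lassos = ∅ := fun h =>
    Set.eq_empty_of_forall_notMem fun t ht => by
      have := ht.1
      rw [h] at this
      exact this
  induction ψ with
  | qf φ =>
    obtain ⟨X, hX, h⟩ := separable_tsemQF hη φ K.Traces v
    have heq : ∀ w, tsemQF η φ (assignOf w) K.Lassos = tsemQF η φ (assignOf w) K.Traces :=
      fun w => tsemQF_congr η φ _ _ fun _ _ => rfl
    refine ⟨X, hX, fun w => (h w).1, fun w => (h w).2, fun w _ hw => ?_, fun w _ hw => ?_⟩
    · exact ((h w).2 hw).trans_eq (heq w).symm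
    · exact (heq w).trans_le (not_lt.1 fun hlt => hw ((h w).1 hlt))
  | ex π ψ ih =>
    rcases K.Traces.eq_empty_or_nonempty with hT | hT
    · simpa [tsem, hT, hempty hT] using exists_isThreshold_const v 0
    obtain ⟨X, hX, h⟩ := ih
    refine ⟨existsUpdate K π X, recognizable_existsUpdate K π hX, ?_, ?_, ?_, ?_⟩
    · intro w hv
      obtain ⟨_, ⟨t, ht, rfl⟩, hlt⟩ := exists_lt_of_lt_csSup (hT.image _) hv
      obtain ⟨s, hs, rfl⟩ := K.mem_traces_iff.1 ht
      exact ⟨s, hs, h.mem_of_lt _ (by simpa only [assignOf_updateWord] using hlt)⟩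
    · rintro w ⟨s, hs, hw⟩
      have := h.le_of_mem _ hw
      rw [assignOf_updateWord] at this
      exact le_csSup_of_le (hbdd _ _ _ _).1 ⟨_, K.mem_traces_iff.2 ⟨s, hs, rfl⟩, rfl⟩ this
    · intro w hl hw
      obtain ⟨s, hs, hsl, hw⟩ := exists_lasso_of_mem_existsUpdate hX hl hw
      have := h.lasso_le_of_mem _ (isLassoWord_updateWord π hl hsl) hw
      rw [assignOf_updateWord] at this
      exact le_csSup_of_le (hbdd _ _ _ _).1 ⟨_, ⟨K.mem_traces_iff.2 ⟨s, hs, rfl⟩, hsl⟩, rfl⟩ this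
    · intro w hl hw
      refine csSup_le ((K.lassos_nonempty hT).image _) ?_
      rintro _ ⟨t, ⟨ht, htl⟩, rfl⟩
      obtain ⟨s, hs, rfl⟩ := K.mem_traces_iff.1 ht
      have := h.lasso_le_of_notMem _ (isLassoWord_updateWord π hl htl) fun hX => hw ⟨s, hs, hX⟩
      simpa only [assignOf_updateWord] using this
  | all π ψ ih =>
    rcases K.Traces.eq_empty_or_nonempty with hT | hT
    · simpa [tsem, hT, hempty hT] using exists_isThreshold_const v 0
    obtain ⟨X, hX, h⟩ := ih
    refine ⟨(existsUpdate K π Xᶜ)ᶜ, (recognizable_existsUpdate K π hX.compl).compl, ?_, ?_, ?_, ?_⟩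
    · rintro w hv ⟨s, hs, hw⟩
      refine hw (h.mem_of_lt _ (hv.trans_le ?_))
      rw [assignOf_updateWord]
      exact csInf_le (hbdd _ _ _ _).2 ⟨_, K.mem_traces_iff.2 ⟨s, hs, rfl⟩, rfl⟩
    · intro w hw
      refine le_csInf (hT.image _) ?_
      rintro _ ⟨t, ht, rfl⟩
      obtain ⟨s, hs, rfl⟩ := K.mem_traces_iff.1 ht
      have := h.le_of_mem (updateWord K π w s) (by_contra fun hX => hw ⟨s, hs, hX⟩)
      simpa only [assignOf_updateWord] using this
    · intro w hl hw
      refine le_csInf ((K.lassos_nonempty hT).image _) ?_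
      rintro _ ⟨t, ⟨ht, htl⟩, rfl⟩
      obtain ⟨s, hs, rfl⟩ := K.mem_traces_iff.1 ht
      have := h.lasso_le_of_mem (updateWord K π w s) (isLassoWord_updateWord π hl htl)
        (by_contra fun hX => hw ⟨s, hs, hX⟩)
      simpa only [assignOf_updateWord] using this
    · intro w hl hw
      obtain ⟨s, hs, hsl, hw⟩ := exists_lasso_of_mem_existsUpdate hX.compl hl (not_not.1 hw)
      have := h.lasso_le_of_notMem _ (isLassoWord_updateWord π hl hsl) hw
      rw [assignOf_updateWord] at this
      exact csInf_le_of_le (hbdd _ _ _ _).2 ⟨_, ⟨K.mem_traces_iff.2 ⟨s, hs, rfl⟩, hsl⟩, rfl⟩ this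

/-- The valuation of all variables encoded by a letter over `AP × Fin k`; variables outside the
range of `vs` receive weight `0`. -/
def decodeLetter {k : ℕ} (vs : Fin k → Var) (l : AP × Fin k → unitInterval) :
    Var → AP → unitInterval := by
  classical
  exact fun x p => if h : ∃ i, vs i = x then l (p, h.choose) else 0

theorem assignOf_decodeLetter {k : ℕ} {vs : Fin k → Var} (hinj : Function.Injective vs)
    (ts : Fin k → Trace AP) (i : Fin k) :
    assignOf (fun n => decodeLetter vs (encode ts n)) (vs i) = ts i := by
  have h : ∃ j, vs j = vs i := ⟨i, rfl⟩
  funext n p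
  simp [assignOf, decodeLetter, encode, hinj h.choose_spec]

/-- Lemma `orna++`. For `⋈ ∈ {<,>}` (with reflexive closure `⋈̲`), every
HyperLTL_temp formula `ψ` with free variables among `π₁,…,π_k`, every weighted Kripke
structure `K` and every `v ∈ [0,1]`, there is an NBA over `W^{AP_{≤k}}` such that for every
trace assignment `Π`: (1) if `⟦ψ⟧_Π^{𝕋(K)} ⋈ v` and all traces of `Π` are in `𝕋(K)` then it
accepts `t_Π`; (2) if it accepts a lasso `t_Π` then all traces of `Π` are in `𝕃(K)` and
`⟦ψ⟧_Π^{𝕃(K)} ⋈̲ v`. -/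
theorem stmt_6 {AP Var D : Type} [DecidableEq Var] [Finite D]
    (η : D → ℕ → ℝ) (hη : ∀ d, IsDiscounting (η d))
    (bowtie : ℝ → ℝ → Prop)
    (hbow : bowtie = (· < ·) ∨ bowtie = (· > ·))
    (k : ℕ) (vs : Fin k → Var) (hinj : Function.Injective vs)
    (ψ : TForm AP Var D) (hfree : freeVars ψ ⊆ Set.range vs)
    (K : Kripke AP) (v : ℝ) (hv : v ∈ Set.Icc (0:ℝ) 1) :
    ∃ A : NBA ((AP × Fin k) → unitInterval),
      ∀ (ts : Fin k → Trace AP) (ρ : Var → Trace AP),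
        (∀ i, ρ (vs i) = ts i) →
        ((bowtie (tsem η ψ ρ K.Traces) v ∧ (∀ i, ts i ∈ K.Traces)) →
          A.Accepts (encode ts)) ∧
        ((A.Accepts (encode ts) ∧ IsLasso (encode ts)) →
          (∀ i, ts i ∈ K.Lassos) ∧
          (bowtie (tsem η ψ ρ K.Lassos) v ∨ tsem η ψ ρ K.Lassos = v)) := by
  have hden : ∃ Y : Set (ℕ → Var → AP → unitInterval), Recognizable Y ∧
      (∀ w, bowtie (tsem η ψ (assignOf w) K.Traces) v → w ∈ Y) ∧
      ∀ w, IsLassoWord w → w ∈ Y → bowtie (tsem η ψ (assignOf w) K.Lassos) v ∨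
        tsem η ψ (assignOf w) K.Lassos = v := by
    obtain ⟨X, hX, h⟩ := exists_isThreshold hη K ψ v
    rcases hbow with rfl | rfl
    · exact ⟨Xᶜ, hX.compl, fun w hw hwX => (h.le_of_mem w hwX).not_gt hw,
        fun w hl hw => (h.lasso_le_of_notMem w hl hw).lt_or_eq⟩
    · exact ⟨X, hX, h.mem_of_lt, fun w hl hw => (h.lasso_le_of_mem w hl hw).lt_or_eq.imp_right
        Eq.symm⟩
  obtain ⟨Y, hY, hmem, hlasso⟩ := hden
  have htr : Recognizable (⋂ i : Fin k, {w : ℕ → AP × Fin k → unitInterval |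
      (fun n p => w n (p, i)) ∈ K.Traces}) :=
    .iInter fun i => K.recognizable_traces.comap fun (l : AP × Fin k → unitInterval) p => l (p, i)
  obtain ⟨A, hA⟩ := ((hY.comap (decodeLetter vs)).inter htr).exists_nba
  refine ⟨A, fun ts ρ hρ => ?_⟩
  have hsem : ∀ T, tsem η ψ ρ T =
      tsem η ψ (assignOf fun n => decodeLetter vs (encode ts n)) T := fun T => by
    refine tsem_congr η ψ T fun x hx => ?_
    obtain ⟨i, rfl⟩ := hfree hx
    rw [hρ, assignOf_decodeLetter hinj]
  rw [hsem, hsem, hA]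
  constructor
  · rintro ⟨hv, ht⟩
    exact ⟨hmem _ hv, Set.mem_iInter.2 ht⟩
  · rintro ⟨⟨hw, ht⟩, hl⟩
    exact ⟨fun i => ⟨Set.mem_iInter.1 ht i,
      IsLassoWord.map (w := encode ts) hl fun l p => l (p, i)⟩,
      hlasso _ (IsLassoWord.map (w := encode ts) hl (decodeLetter vs)) hw⟩

end
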